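/- (Theorem 1 in flat-boundary coordinates.) Let φ̂ be an idealized one-dimensional diffuse-interface profile and φ^ε(s) := φ̂(s/ε) its rescaling. Let A ⊆ ℝ^d be a measurable set of finite Lebesgue measure, and let f, g : A × ℝ → ℝ be measurable with |f| ≤ M and |g| ≤ M everywhere, and such that for each y ∈ A the function s ↦ g(y, s) is L-Lipschitz with L independent of y. Then lim_{ε→0⁺} ∫_A ∫_{-ε/2}^{ε/2} ( f(y,s) φ^ε(s) + g(y,s) |(φ^ε)'(s)| ) ds dy = ∫_A g(y, 0) dy. -/

import Mathlib

open MeasureTheory Filter Set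

/-!
In the stretched variable `t = s / ε` the interface layer becomes a fixed interval, `f` is
multiplied by `ε`, and `|(φ^ε)'(s)| ds` becomes `|φ'(t)| dt`. Hence the integrand converges
pointwise to `g y 0 * |φ' t|` and is dominated independently of `ε ≤ 1`, so the double integral
converges to the product of `∫ g y 0` and the total variation `∫ |φ'|`, which is `1` for a monotone
profile rising from `0` to `1`.
-/

section StretchedIntegrand

variable {Y : Type*}

/-- The diffuse-interface integrand `f φ^ε + g |(φ^ε)'|` at the point `(y, ε * t)`, multiplied by
the Jacobian `ε` of the substitution `s = ε * t`. It turns integrals over the shrinking layer into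
integrals over a fixed interval. The chain-rule factor `ε⁻¹` in `(φ^ε)'` is already cancelled, so
the formula is meaningful at `ε = 0` too. -/
noncomputable def stretchedIntegrand (φ : ℝ → ℝ) (f g : Y → ℝ → ℝ) (ε : ℝ) (p : Y × ℝ) : ℝ :=
  ε * (f p.1 (ε * p.2) * φ p.2) + g p.1 (ε * p.2) * |deriv φ p.2|

variable {φ : ℝ → ℝ} {f g : Y → ℝ → ℝ} {ε : ℝ}

theorem integral_interface_eq_integral_stretchedIntegrand (hε : 0 < ε) (a b : ℝ) (y : Y) :
    ∫ s in (ε * a)..(ε * b), (f y s * φ (s / ε) + g y s * |deriv (fun t => φ (t / ε)) s|) =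
      ∫ t in a..b, stretchedIntegrand φ f g ε (y, t) := by
  have deriv_rescaled (s : ℝ) : deriv (fun t => φ (t / ε)) s = ε⁻¹ * deriv φ (s / ε) := by
    simpa only [div_eq_inv_mul, smul_eq_mul] using deriv_comp_mul_left ε⁻¹ φ s
  rw [← intervalIntegral.mul_integral_comp_mul_left, ← intervalIntegral.integral_const_mul]
  refine intervalIntegral.integral_congr fun t _ => ?_
  simp only [deriv_rescaled, stretchedIntegrand, mul_div_cancel_left₀ t hε.ne', abs_mul,
    abs_of_pos (inv_pos.2 hε)]
  field_simp

theorem abs_stretchedIntegrand_le {m : ℝ} {p : Y × ℝ} (hε : |ε| ≤ 1)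
    (hf : ∀ s, |f p.1 s| ≤ m) (hg : ∀ s, |g p.1 s| ≤ m) :
    |stretchedIntegrand φ f g ε p| ≤ m * (|φ p.2| + |deriv φ p.2|) :=
  calc |stretchedIntegrand φ f g ε p|
      ≤ |ε * (f p.1 (ε * p.2) * φ p.2)| + |g p.1 (ε * p.2) * (|deriv φ p.2|)| := abs_add_le _ _
    _ = |ε| * (|f p.1 (ε * p.2)| * |φ p.2|) + |g p.1 (ε * p.2)| * |deriv φ p.2| := by
        simp only [abs_mul, abs_abs]
    _ ≤ 1 * (m * |φ p.2|) + m * |deriv φ p.2| := by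
        gcongr
        exacts [hf _, hg _]
    _ = m * (|φ p.2| + |deriv φ p.2|) := by ring

theorem tendsto_stretchedIntegrand {m : ℝ} {p : Y × ℝ} (hf : ∀ s, |f p.1 s| ≤ m)
    (hg : ContinuousAt (g p.1) 0) :
    Tendsto (fun ε => stretchedIntegrand φ f g ε p) (nhds 0) (nhds (g p.1 0 * |deriv φ p.2|)) := by
  have bulk : Tendsto (fun ε => ε * (f p.1 (ε * p.2) * φ p.2)) (nhds 0) (nhds 0) := by
    refine tendsto_id.zero_mul_isBoundedUnder_le (isBoundedUnder_of ⟨m * |φ p.2|, fun ε => ?_⟩)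
    simp only [Function.comp_apply, Real.norm_eq_abs, abs_mul]
    gcongr
    exact hf _
  have stretch : Tendsto (fun ε : ℝ => ε * p.2) (nhds 0) (nhds 0) := by
    simpa only [zero_mul] using (continuous_mul_const p.2).tendsto 0
  simpa only [stretchedIntegrand, Function.comp_apply, zero_add] using
    bulk.add ((hg.tendsto.comp stretch).mul_const |deriv φ p.2|)

variable [MeasurableSpace Y] {μ : Measure Y} {ν : Measure ℝ} {m : Y → ℝ}

theorem aestronglyMeasurable_stretchedIntegrand (hφ : AEStronglyMeasurable φ ν)
    (hf : Measurable (Function.uncurry f)) (hg : Measurable (Function.uncurry g)) (ε : ℝ) :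
    AEStronglyMeasurable (stretchedIntegrand φ f g ε) (μ.prod ν) := by
  have stretch : Measurable (fun p : Y × ℝ => (p.1, ε * p.2)) := by fun_prop
  have hφ' : Measurable (fun p : Y × ℝ => |deriv φ p.2|) :=
    ((measurable_deriv φ).comp measurable_snd).abs
  exact (((hf.comp stretch).aestronglyMeasurable.mul hφ.comp_snd).const_mul ε).add
    ((hg.comp stretch).mul hφ').aestronglyMeasurable

theorem ae_prod_norm_stretchedIntegrand_le (hε : |ε| ≤ 1) (hfm : ∀ᵐ y ∂μ, ∀ s, |f y s| ≤ m y)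
    (hgm : ∀ᵐ y ∂μ, ∀ s, |g y s| ≤ m y) :
    ∀ᵐ p ∂μ.prod ν,
      ‖stretchedIntegrand φ f g ε p‖ ≤ m p.1 * (|φ p.2| + |deriv φ p.2|) := by
  filter_upwards [Measure.quasiMeasurePreserving_fst.ae hfm,
    Measure.quasiMeasurePreserving_fst.ae hgm] with p hfp hgp
  exact abs_stretchedIntegrand_le hε hfp hgp

theorem integrable_stretchedIntegrand (hφ : Integrable φ ν) (hφ' : Integrable (deriv φ) ν)
    (hf : Measurable (Function.uncurry f)) (hg : Measurable (Function.uncurry g))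
    (hm : Integrable m μ) (hfm : ∀ᵐ y ∂μ, ∀ s, |f y s| ≤ m y)
    (hgm : ∀ᵐ y ∂μ, ∀ s, |g y s| ≤ m y) (hε : |ε| ≤ 1) :
    Integrable (stretchedIntegrand φ f g ε) (μ.prod ν) :=
  (hm.mul_prod (hφ.abs.add hφ'.abs)).mono'
    (aestronglyMeasurable_stretchedIntegrand hφ.aestronglyMeasurable hf hg ε)
    (ae_prod_norm_stretchedIntegrand_le hε hfm hgm)

variable [SFinite μ] [SFinite ν]

theorem tendsto_integral_stretchedIntegrand (hφ : Integrable φ ν) (hφ' : Integrable (deriv φ) ν)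
    (hf : Measurable (Function.uncurry f)) (hg : Measurable (Function.uncurry g))
    (hm : Integrable m μ) (hfm : ∀ᵐ y ∂μ, ∀ s, |f y s| ≤ m y)
    (hgm : ∀ᵐ y ∂μ, ∀ s, |g y s| ≤ m y) (hg0 : ∀ᵐ y ∂μ, ContinuousAt (g y) 0) :
    Tendsto (fun ε => ∫ p, stretchedIntegrand φ f g ε p ∂μ.prod ν) (nhds 0)
      (nhds ((∫ y, g y 0 ∂μ) * ∫ t, |deriv φ t| ∂ν)) := by
  have small : ∀ᶠ ε : ℝ in nhds 0, |ε| ≤ 1 :=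
    (continuous_abs.tendsto' (0 : ℝ) 0 abs_zero).eventually_le_const one_pos
  rw [← integral_prod_mul]
  refine tendsto_integral_filter_of_dominated_convergence _
    (.of_forall (aestronglyMeasurable_stretchedIntegrand hφ.aestronglyMeasurable hf hg))
    (small.mono fun ε hε => ae_prod_norm_stretchedIntegrand_le hε hfm hgm)
    (hm.mul_prod (hφ.abs.add hφ'.abs)) ?_
  filter_upwards [Measure.quasiMeasurePreserving_fst.ae hfm,
    Measure.quasiMeasurePreserving_fst.ae hg0] with p hfp hgp
  exact tendsto_stretchedIntegrand hfp hgp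

end StretchedIntegrand

theorem integral_abs_deriv_eq_sub_of_monotone {φ : ℝ → ℝ} {a b : ℝ} (hmono : Monotone φ)
    (hφ : AbsolutelyContinuousOnInterval φ a b) :
    ∫ t in a..b, |deriv φ t| = φ b - φ a := by
  simp only [abs_of_nonneg hmono.deriv_nonneg, hφ.integral_deriv_eq_sub]

theorem stmt4_general {Y : Type*} [MeasurableSpace Y] {μ : Measure Y} [SFinite μ]
    {φ : ℝ → ℝ} {a b : ℝ} (hab : a ≤ b) (hφ : AbsolutelyContinuousOnInterval φ a b)
    {f g : Y → ℝ → ℝ} (hf : Measurable (Function.uncurry f))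
    (hg : Measurable (Function.uncurry g)) {m : Y → ℝ} (hm : Integrable m μ)
    (hfm : ∀ᵐ y ∂μ, ∀ s, |f y s| ≤ m y) (hgm : ∀ᵐ y ∂μ, ∀ s, |g y s| ≤ m y)
    (hg0 : ∀ᵐ y ∂μ, ContinuousAt (g y) 0) :
    Tendsto (fun ε : ℝ => ∫ y, (∫ s in (ε * a)..(ε * b),
        (f y s * φ (s / ε) + g y s * |deriv (fun t => φ (t / ε)) s|)) ∂μ)
      (nhdsWithin 0 (Ioi 0)) (nhds ((∫ y, g y 0 ∂μ) * ∫ t in a..b, |deriv φ t|)) := by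
  have integrable_φ : Integrable φ (volume.restrict (Ioc a b)) :=
    hφ.continuousOn.intervalIntegrable.1
  have integrable_deriv : Integrable (deriv φ) (volume.restrict (Ioc a b)) :=
    hφ.intervalIntegrable_deriv.1
  rw [intervalIntegral.integral_of_le hab]
  refine ((tendsto_integral_stretchedIntegrand integrable_φ integrable_deriv hf hg hm hfm hgm
    hg0).mono_left nhdsWithin_le_nhds).congr' ?_
  filter_upwards [Ioc_mem_nhdsGT one_pos] with ε ⟨ε_pos, ε_le_one⟩
  have hε : |ε| ≤ 1 := by rwa [abs_of_pos ε_pos]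
  simp only [integral_interface_eq_integral_stretchedIntegrand ε_pos,
    intervalIntegral.integral_of_le hab]
  exact integral_prod _
    (integrable_stretchedIntegrand integrable_φ integrable_deriv hf hg hm hfm hgm hε)

/-- Theorem 1 in flat-boundary coordinates: For an idealized 1D
diffuse-interface profile `φhat` with rescaling `φ^ε (s) = φhat (s/ε)`, a measurable set
`A ⊆ ℝ^d` of finite Lebesgue measure, and measurable `f, g : A × ℝ → ℝ` with `|f| ≤ M`,
`|g| ≤ M`, and `s ↦ g (y, s)` uniformly `L`-Lipschitz for `y ∈ A`, we have
`∫_A ∫_{-ε/2}^{ε/2} (f φ^ε + g |(φ^ε)'|) ds dy → ∫_A g(y,0) dy` as `ε → 0⁺`. -/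
theorem stmt4 (d : ℕ) (φhat : ℝ → ℝ) (K : NNReal)
    (hlip : LipschitzWith K φhat) (hmono : Monotone φhat)
    (hzero : ∀ s : ℝ, s ≤ -(1/2) → φhat s = 0)
    (hone : ∀ s : ℝ, (1/2 : ℝ) ≤ s → φhat s = 1)
    (A : Set (EuclideanSpace ℝ (Fin d))) (hA : MeasurableSet A) (hAfin : volume A < ⊤)
    (f g : EuclideanSpace ℝ (Fin d) → ℝ → ℝ)
    (hfm : Measurable (Function.uncurry f)) (hgm : Measurable (Function.uncurry g))
    (M : ℝ) (hfb : ∀ y s, |f y s| ≤ M) (hgb : ∀ y s, |g y s| ≤ M)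
    (L : NNReal) (hgL : ∀ y ∈ A, LipschitzWith L (g y)) :
    Tendsto (fun ε : ℝ => ∫ y in A, ∫ s in (-(ε/2))..(ε/2),
        (f y s * φhat (s/ε) + g y s * |deriv (fun t => φhat (t/ε)) s|))
      (nhdsWithin 0 (Ioi 0)) (nhds (∫ y in A, g y 0)) := by
  have hac : AbsolutelyContinuousOnInterval φhat (-(1/2)) (1/2) :=
    hlip.lipschitzOnWith.absolutelyContinuousOnInterval
  have total_variation : ∫ t in (-(1/2))..(1/2), |deriv φhat t| = 1 := by
    rw [integral_abs_deriv_eq_sub_of_monotone hmono hac, hone _ le_rfl, hzero _ le_rfl, sub_zero]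
  have hM : Integrable (fun _ => M) (volume.restrict A) := integrableOn_const hAfin.ne
  have hg0 : ∀ᵐ y ∂volume.restrict A, ContinuousAt (g y) 0 :=
    ae_restrict_of_forall_mem hA fun y hy => (hgL y hy).continuous.continuousAt
  simpa only [total_variation, mul_one, mul_neg, mul_one_div] using
    stmt4_general (by norm_num) hac hfm hgm hM (.of_forall hfb) (.of_forall hgb) hg0
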